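/- Drift lower bound for log-distance of the (1+1)-ES: for any measurable objective h on ℝ^d with d ≥ 2, any m ∈ ℝ^d with m ≠ 0, σ > 0, and z ∼ N(0, I_d), E[min{log(‖m + σz‖/‖m‖), 0}] ≥ −1/d. Consequently the one-step conditional expected decrease of log‖m_t‖ under the (1+1)-ES is at least −1/d, and (with the conditional-variance summability condition) the lower convergence rate satisfies exp(−CR^lower) ≥ exp(−1/d). -/

import Mathlib

open MeasureTheory ProbabilityTheory

noncomputable def stdGaussian (d : ℕ) : Measure (EuclideanSpace ℝ (Fin d)) :=
  Measure.map (⇑(EuclideanSpace.equiv (Fin d) ℝ).symm)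
    (Measure.pi fun _ : Fin d => gaussianReal 0 1)

/-- A finite product of measures with real densities has the product density. -/
lemma pi_withDensity_ofReal {ι : Type*} [Fintype ι] {f : ι → ℝ → ℝ}
    (hf : ∀ i, Integrable (f i)) (hf0 : ∀ i x, 0 ≤ f i x)
    [∀ i, SigmaFinite ((volume : Measure ℝ).withDensity fun x => ENNReal.ofReal (f i x))] :
    Measure.pi (fun i => (volume : Measure ℝ).withDensity fun x => ENNReal.ofReal (f i x)) =
      (volume : Measure (ι → ℝ)).withDensity fun x => ENNReal.ofReal (∏ i, f i (x i)) := by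
  refine Measure.pi_eq fun s hs => ?_
  rw [withDensity_apply _ (MeasurableSet.univ_pi hs), volume_pi, Measure.restrict_pi_pi,
    ← ofReal_integral_eq_lintegral_ofReal
      (Integrable.fintype_prod fun i => (hf i).restrict)
      (ae_of_all _ fun x => Finset.prod_nonneg fun i _ => hf0 i (x i)),
    integral_fintype_prod_eq_prod,
    ENNReal.ofReal_prod_of_nonneg fun i _ => integral_nonneg (hf0 i)]
  refine Finset.prod_congr rfl fun i _ => ?_
  rw [withDensity_apply _ (hs i),
    ofReal_integral_eq_lintegral_ofReal (hf i).restrict (ae_of_all _ (hf0 i))]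

/-- The density of the standard Gaussian measure. -/
noncomputable def stdGaussianDensity (d : ℕ) (x : EuclideanSpace ℝ (Fin d)) : ENNReal :=
  ENNReal.ofReal (∏ i, gaussianPDFReal 0 1 (x i))

lemma measurable_stdGaussianDensity (d : ℕ) : Measurable (stdGaussianDensity d) := by
  unfold stdGaussianDensity
  refine ENNReal.measurable_ofReal.comp (Finset.measurable_prod _ fun i _ => ?_)
  exact (measurable_gaussianPDFReal 0 1).comp (by fun_prop)

lemma stdGaussianDensity_le_of_norm_le {d : ℕ} {x y : EuclideanSpace ℝ (Fin d)}
    (h : ‖y‖ ≤ ‖x‖) : stdGaussianDensity d x ≤ stdGaussianDensity d y := by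
  have hsq : ∑ i, y i ^ 2 ≤ ∑ i, x i ^ 2 := by
    have := pow_le_pow_left₀ (norm_nonneg y) h 2
    simpa [EuclideanSpace.real_norm_sq_eq] using this
  refine ENNReal.ofReal_le_ofReal ?_
  simp only [gaussianPDFReal, Finset.prod_mul_distrib, ← Real.exp_sum, ← Finset.sum_div,
    Finset.sum_neg_distrib, sub_zero]
  gcongr

lemma stdGaussian_eq_withDensity (d : ℕ) :
    _root_.stdGaussian d = volume.withDensity (stdGaussianDensity d) := by
  have hpi : (Measure.pi fun _ : Fin d => gaussianReal 0 1) =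
      volume.withDensity fun x => ENNReal.ofReal (∏ i, gaussianPDFReal 0 1 (x i)) := by
    have hg : gaussianReal 0 1 = (volume : Measure ℝ).withDensity
        fun x => ENNReal.ofReal (gaussianPDFReal 0 1 x) :=
      gaussianReal_of_var_ne_zero 0 one_ne_zero
    have : SigmaFinite ((volume : Measure ℝ).withDensity
        fun x => ENNReal.ofReal (gaussianPDFReal 0 1 x)) := by
      rw [← hg]; infer_instance
    rw [hg]
    exact pi_withDensity_ofReal (fun _ => integrable_gaussianPDFReal 0 1)
      (fun _ => gaussianPDFReal_nonneg 0 1)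
  have hvol := EuclideanSpace.volume_preserving_symm_measurableEquiv_toLp (Fin d) |>.symm
  ext s hs
  have hmeas : Measurable (⇑(EuclideanSpace.equiv (Fin d) ℝ).symm) := hvol.measurable
  rw [_root_.stdGaussian, Measure.map_apply hmeas hs, hpi, withDensity_apply _ (hmeas hs),
    withDensity_apply _ hs]
  exact hvol.setLIntegral_comp_preimage hs (measurable_stdGaussianDensity d)

instance isProbabilityMeasure_stdGaussian (d : ℕ) :
    IsProbabilityMeasure (_root_.stdGaussian d) :=
  Measure.isProbabilityMeasure_map
    (EuclideanSpace.equiv (Fin d) ℝ).symm.continuous.measurable.aemeasurable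

/-- On the ball of radius `r ‖c‖` around `c`, the dilation with ratio `r⁻¹` fixing
`(1 + r) • c` does not increase the norm. -/
lemma norm_inv_smul_sub_le {E : Type*} [NormedAddCommGroup E] [InnerProductSpace ℝ E]
    {c x : E} {r : ℝ} (hr0 : 0 < r) (hr1 : r ≤ 1) (hx : ‖x - c‖ ≤ r * ‖c‖) :
    ‖r⁻¹ • (x - (1 - r ^ 2) • c)‖ ≤ ‖x‖ := by
  have h1 : ‖x - c‖ ^ 2 ≤ r ^ 2 * ‖c‖ ^ 2 := by
    rw [← mul_pow]; exact pow_le_pow_left₀ (norm_nonneg _) hx 2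
  have h2 : ‖x - (1 - r ^ 2) • c‖ ≤ r * ‖x‖ := by
    refine le_of_sq_le_sq ?_ (by positivity)
    rw [norm_sub_sq_real] at h1 ⊢
    rw [inner_smul_right, norm_smul, mul_pow, mul_pow, Real.norm_eq_abs, sq_abs]
    nlinarith [mul_le_mul_of_nonneg_left h1 (show 0 ≤ 1 - r ^ 2 by nlinarith)]
  rw [norm_smul, norm_inv, Real.norm_of_nonneg hr0.le]
  exact (inv_mul_le_iff₀ hr0).2 h2

lemma stdGaussian_closedBall_le {d : ℕ} (c : EuclideanSpace ℝ (Fin d)) {r : ℝ}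
    (hr0 : 0 < r) (hr1 : r ≤ 1) :
    _root_.stdGaussian d (Metric.closedBall c (r * ‖c‖)) ≤ ENNReal.ofReal (r ^ d) := by
  have hone : ∫⁻ x, stdGaussianDensity d x = 1 := by
    rw [← setLIntegral_univ, ← withDensity_apply _ MeasurableSet.univ,
      ← stdGaussian_eq_withDensity, measure_univ]
  rw [stdGaussian_eq_withDensity, withDensity_apply _ Metric.isClosed_closedBall.measurableSet]
  calc ∫⁻ x in Metric.closedBall c (r * ‖c‖), stdGaussianDensity d x
      ≤ ∫⁻ x in Metric.closedBall c (r * ‖c‖),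
          stdGaussianDensity d (r⁻¹ • (x - (1 - r ^ 2) • c)) :=
        setLIntegral_mono' Metric.isClosed_closedBall.measurableSet fun x hx =>
          stdGaussianDensity_le_of_norm_le
            (norm_inv_smul_sub_le hr0 hr1 (by simpa [dist_eq_norm] using hx))
    _ ≤ ∫⁻ x, stdGaussianDensity d (r⁻¹ • (x - (1 - r ^ 2) • c)) := setLIntegral_le_lintegral _ _
    _ = ∫⁻ x, stdGaussianDensity d (r⁻¹ • x) :=
        lintegral_sub_right_eq_self (fun x => stdGaussianDensity d (r⁻¹ • x)) _
    _ = ENNReal.ofReal (r ^ d) := by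
        rw [← lintegral_map (measurable_stdGaussianDensity d) (measurable_const_smul r⁻¹),
          Measure.map_addHaar_smul _ (inv_ne_zero hr0.ne'), lintegral_smul_measure, hone]
        simp [abs_of_pos hr0]

lemma lintegral_ofReal_exp_neg_pow {d : ℕ} (hd : 0 < d) :
    ∫⁻ t in Set.Ioi (0 : ℝ), ENNReal.ofReal (Real.exp (-t) ^ d) = ENNReal.ofReal (1 / d) := by
  have hd' : -(d : ℝ) < 0 := by simpa using hd
  have hexp : ∀ t : ℝ, Real.exp (-t) ^ d = Real.exp (-(d : ℝ) * t) := fun t => by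
    rw [← Real.exp_nat_mul]; ring_nf
  simp_rw [hexp]
  rw [← ofReal_integral_eq_lintegral_ofReal (integrableOn_exp_mul_Ioi hd' 0)
    (ae_of_all _ fun t => (Real.exp_pos _).le), integral_exp_mul_Ioi hd']
  simp

theorem stmt_19 {d : ℕ} (hd : 2 ≤ d)
    (m : EuclideanSpace ℝ (Fin d)) (hm : m ≠ 0) (σ : ℝ) (hσ : 0 < σ) :
    -(1 / (d : ℝ)) ≤
      ∫ z, min (Real.log (‖m + σ • z‖ / ‖m‖)) 0 ∂(stdGaussian d) := by
  have hm' : 0 < ‖m‖ := norm_pos_iff.2 hm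
  set f : EuclideanSpace ℝ (Fin d) → ℝ := fun z => -min (Real.log (‖m + σ • z‖ / ‖m‖)) 0 with hf
  have hf0 : ∀ z, 0 ≤ f z := fun z => neg_nonneg.2 (min_le_right _ _)
  have hfm : Measurable f := by fun_prop
  have hball : ∀ t : ℝ, 0 < t → {z | t ≤ f z} ⊆
      Metric.closedBall (-(σ⁻¹ • m)) (Real.exp (-t) * ‖-(σ⁻¹ • m)‖) := by
    intro t ht z hz
    have hlog : Real.log (‖m + σ • z‖ / ‖m‖) ≤ -t := by
      have hmin : min (Real.log (‖m + σ • z‖ / ‖m‖)) 0 ≤ -t := le_neg.1 hz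
      exact (min_le_iff.1 hmin).resolve_right (by linarith)
    have hratio : ‖m + σ • z‖ ≤ Real.exp (-t) * ‖m‖ := by
      rw [← div_le_iff₀ hm']
      exact (Real.le_exp_log _).trans (Real.exp_le_exp.2 hlog)
    have hz' : z - -(σ⁻¹ • m) = σ⁻¹ • (m + σ • z) := by
      rw [smul_add, inv_smul_smul₀ hσ.ne', sub_neg_eq_add, add_comm]
    rw [mem_closedBall_iff_norm, hz', norm_neg, norm_smul, norm_smul]
    calc ‖σ⁻¹‖ * ‖m + σ • z‖ ≤ ‖σ⁻¹‖ * (Real.exp (-t) * ‖m‖) := by gcongr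
      _ = Real.exp (-t) * (‖σ⁻¹‖ * ‖m‖) := by ring
  have hlint : ∫⁻ z, ENNReal.ofReal (f z) ∂(_root_.stdGaussian d) ≤ ENNReal.ofReal (1 / d) := by
    rw [lintegral_eq_lintegral_meas_le _ (ae_of_all _ hf0) hfm.aemeasurable,
      ← lintegral_ofReal_exp_neg_pow (by omega : 0 < d)]
    refine setLIntegral_mono' measurableSet_Ioi fun t ht => ?_
    exact (measure_mono (hball t ht)).trans (stdGaussian_closedBall_le _ (Real.exp_pos _)
      (Real.exp_le_one_iff.2 (neg_nonpos.2 (le_of_lt ht))))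
  have hint : ∫ z, f z ∂(_root_.stdGaussian d) ≤ 1 / d := by
    rw [integral_eq_lintegral_of_nonneg_ae (ae_of_all _ hf0) hfm.aestronglyMeasurable]
    exact ENNReal.toReal_le_of_le_ofReal (by positivity) hlint
  rw [hf, integral_neg] at hint
  linarith
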